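/- Let l_1, …, l_N : ℝ^d → ℝ each be differentiable, β-smooth, G-Lipschitz, and satisfy 0 ≤ l_i(θ) ≤ B for all θ. Fix η > 0, T ≥ 1 and set α = sqrt(2B/(G²βT)). Consider the stochastic MR-SGD process: θ_0 ∈ ℝ^d, p_0 uniform; given a realized index sequence i_0, …, i_{t−1}, set θ_{t+1} = θ_t − α ∇l_{i_t}(θ_t), p_{t+1,j} = exp(−η Σ_{s=1}^{t+1} l_j(θ_s)) / Σ_{k=1}^N exp(−η Σ_{s=1}^{t+1} l_k(θ_s)), and sample i_t from the distribution p_t over {1,…,N}. Let F(θ, p) = Σ_{j=1}^N p_j l_j(θ) and let ∇F(θ_t, p_t) = Σ_{j=1}^N p_{t,j} ∇l_j(θ_t). Then (1/T) Σ_{t=0}^{T−1} E‖∇F(θ_t, p_t)‖² ≤ G · sqrt(2βB/T), where the expectation over the indices i_0, …, i_{t−1} is the finite sum over all sequences (i_0, …, i_{t−1}) ∈ {1,…,N}^t weighted by the product Π_{s=0}^{t−1} p_{s, i_s} (each p_s being determined by the preceding indices). -/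

import Mathlib

open Real Finset

/-- Extend a finite index sequence `s : Fin t → Fin N` to an infinite sequence
`ℕ → Fin N`, padding with the index `0`. -/
def padSeq {N : ℕ} (hN : 0 < N) {t : ℕ} (s : Fin t → Fin N) : ℕ → Fin N :=
  fun n => if h : n < t then s ⟨n, h⟩ else ⟨0, hN⟩

open InnerProductSpace in
lemma aux_descent {E : Type*} [NormedAddCommGroup E] [InnerProductSpace ℝ E] [CompleteSpace E]
    (f : E → ℝ) (β : ℝ) (hf : Differentiable ℝ f)
    (hs : ∀ x y, ‖gradient f x - gradient f y‖ ≤ β * ‖x - y‖) (x v : E) :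
    f (x + v) ≤ f x + inner ℝ (gradient f x) v + β / 2 * ‖v‖ ^ 2 := by
  have hline : ∀ t : ℝ, HasDerivAt (fun t : ℝ => x + t • v) v t := by
    intro t
    simpa using ((hasDerivAt_id t).smul_const v).const_add x
  have hφ : ∀ t : ℝ, HasDerivAt (fun t : ℝ => f (x + t • v) - t * inner ℝ (gradient f x) v
      - β / 2 * ‖v‖ ^ 2 * t ^ 2)
      (inner ℝ (gradient f (x + t • v)) v - inner ℝ (gradient f x) v - β * ‖v‖ ^ 2 * t) t := by
    intro t
    have h1 := ((hf (x + t • v)).hasGradientAt.hasFDerivAt).comp_hasDerivAt t (hline t)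
    have h2 := (hasDerivAt_id t).mul_const (inner ℝ (gradient f x) v)
    have h3 := ((hasDerivAt_id t).pow 2).const_mul (β / 2 * ‖v‖ ^ 2)
    have := (h1.sub h2).sub h3
    refine HasDerivAt.congr_deriv this ?_
    simp only [InnerProductSpace.toDual_apply_apply, id]
    norm_num
    ring
  have hanti : AntitoneOn (fun t : ℝ => f (x + t • v) - t * inner ℝ (gradient f x) v
      - β / 2 * ‖v‖ ^ 2 * t ^ 2) (Set.Icc 0 1) := by
    apply antitoneOn_of_deriv_nonpos (convex_Icc 0 1)
    · exact fun t _ => (hφ t).continuousAt.continuousWithinAt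
    · exact fun t _ => (hφ t).differentiableAt.differentiableWithinAt
    · intro t ht
      rw [interior_Icc] at ht
      rw [(hφ t).deriv, ← inner_sub_left]
      have h1 := real_inner_le_norm (gradient f (x + t • v) - gradient f x) v
      have h2 := hs (x + t • v) x
      rw [add_sub_cancel_left, norm_smul, Real.norm_of_nonneg ht.1.le] at h2
      nlinarith [mul_le_mul_of_nonneg_right h2 (norm_nonneg v)]
  have := hanti (Set.left_mem_Icc.2 zero_le_one) (Set.right_mem_Icc.2 zero_le_one) zero_le_one
  simp only [zero_smul, add_zero, one_smul] at this
  linarith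

lemma aux_grad {E : Type*} [NormedAddCommGroup E] [InnerProductSpace ℝ E] [CompleteSpace E]
    (f : E → ℝ) (G : ℝ) (hG : 0 < G)
    (hl : ∀ x y, |f x - f y| ≤ G * ‖x - y‖) (x : E) : ‖gradient f x‖ ≤ G := by
  have h : LipschitzWith (⟨G, hG.le⟩ : NNReal) f := LipschitzWith.of_dist_le_mul fun x y => by
    rw [Real.dist_eq, dist_eq_norm]; exact hl x y
  have := norm_fderiv_le_of_lipschitz ℝ h (x₀ := x)
  unfold gradient
  rw [LinearIsometryEquiv.norm_map]
  exact this

lemma aux_cheb {N : ℕ} (p a : Fin N → ℝ) (η : ℝ) (hη : 0 < η) (hp : ∀ j, 0 ≤ p j)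
    (h1 : ∑ j, p j = 1) (hZ : 0 < ∑ k, p k * Real.exp (-η * a k)) :
    ∑ j, (p j * Real.exp (-η * a j) / ∑ k, p k * Real.exp (-η * a k)) * a j
      ≤ ∑ j, p j * a j := by
  set m := ∑ j, p j * a j with hm
  have key : ∑ j, p j * ((a j - m) * (Real.exp (-η * a j) - Real.exp (-η * m))) ≤ 0 := by
    apply Finset.sum_nonpos
    intro j _
    apply mul_nonpos_of_nonneg_of_nonpos (hp j)
    rcases le_total (a j) m with h | h
    · exact mul_nonpos_of_nonpos_of_nonneg (by linarith)
        (sub_nonneg.2 (Real.exp_le_exp.2 (by nlinarith)))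
    · exact mul_nonpos_of_nonneg_of_nonpos (by linarith)
        (sub_nonpos.2 (Real.exp_le_exp.2 (by nlinarith)))
  have e : ∑ j, p j * ((a j - m) * (Real.exp (-η * a j) - Real.exp (-η * m)))
      = ∑ j, p j * Real.exp (-η * a j) * a j - m * ∑ j, p j * Real.exp (-η * a j)
        - Real.exp (-η * m) * (∑ j, p j * a j) + Real.exp (-η * m) * m * ∑ j, p j := by
    simp only [Finset.mul_sum, ← Finset.sum_sub_distrib, ← Finset.sum_add_distrib]
    exact Finset.sum_congr rfl fun j _ => by ring
  rw [e, h1, ← hm] at key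
  have : ∑ j, (p j * Real.exp (-η * a j) / ∑ k, p k * Real.exp (-η * a k)) * a j
      = (∑ j, p j * Real.exp (-η * a j) * a j) / ∑ k, p k * Real.exp (-η * a k) := by
    rw [Finset.sum_div]
    exact Finset.sum_congr rfl fun j _ => by ring
  rw [this, div_le_iff₀ hZ]
  linarith

lemma aux_pad {N : ℕ} (hN : 0 < N) {t : ℕ} (s : Fin t → Fin N) (j : Fin N) :
    padSeq hN (Fin.snoc s j : Fin (t + 1) → Fin N) = Function.update (padSeq hN s) t j := by
  funext n
  unfold padSeq
  rcases lt_trichotomy n t with h | h | h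
  · rw [dif_pos (by omega), Function.update_of_ne (by omega), dif_pos h]
    simp [Fin.snoc, h]
  · subst h
    simp [Fin.snoc]
  · rw [dif_neg (by omega), Function.update_of_ne (by omega), dif_neg (by omega)]

lemma aux_E {N : ℕ} (hN : 0 < N) (P : ℕ → (ℕ → Fin N) → Fin N → ℝ)
    (hPa : ∀ t ω ω', (∀ k < t, ω k = ω' k) → P t ω = P t ω')
    (t : ℕ) (X : (ℕ → Fin N) → ℝ) :
    ∑ s : Fin (t + 1) → Fin N, (∏ k : Fin (t + 1), P k (padSeq hN s) (s k)) * X (padSeq hN s)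
    = ∑ s : Fin t → Fin N, (∏ k : Fin t, P k (padSeq hN s) (s k)) *
        ∑ j, P t (padSeq hN s) j * X (Function.update (padSeq hN s) t j) := by
  rw [← (Fin.snocEquiv (fun _ : Fin (t + 1) => Fin N)).sum_comp, Fintype.sum_prod_type,
    Finset.sum_comm]
  refine Finset.sum_congr rfl fun s _ => ?_
  rw [Finset.mul_sum]
  refine Finset.sum_congr rfl fun j _ => ?_
  have hs : (Fin.snocEquiv (fun _ : Fin (t + 1) => Fin N)) (j, s)
    = (Fin.snoc s j : Fin (t + 1) → Fin N) := rfl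
  rw [hs, aux_pad, Fin.prod_univ_castSucc]
  have hup : ∀ k ≤ t, P k (Function.update (padSeq hN s) t j) = P k (padSeq hN s) := fun k hk =>
    hPa k _ _ fun i hi => Function.update_of_ne (by omega) _ _
  have : ∀ k : Fin t, P (k.castSucc : Fin (t+1)) (Function.update (padSeq hN s) t j)
      ((Fin.snoc s j : Fin (t + 1) → Fin N) k.castSucc) = P k (padSeq hN s) (s k) := by
    intro k
    rw [Fin.snoc_castSucc, Fin.val_castSucc, hup k k.2.le]
  rw [Finset.prod_congr rfl fun k _ => this k, Fin.snoc_last, Fin.val_last, hup t le_rfl]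
  ring

/-- Convergence of MR with SGD sampling according to pₜ
(Theorem 2 of the paper). With β-smooth, G-Lipschitz, B-bounded losses and
step size α = √(2B/(G²βT)), the time average of the expected squared norms of
the weighted gradients ∇F(θₜ, pₜ) is at most G√(2βB/T); the expectation over
the sampled indices i₀, …, i_{t−1} is the finite sum over all index sequences
weighted by the product of the sampling probabilities. -/
theorem mr_sgd_convergence
    {N d : ℕ} (hN : 0 < N) (hd : 1 ≤ d)
    (l : Fin N → EuclideanSpace ℝ (Fin d) → ℝ)
    (β G B η : ℝ) (hβ : 0 < β) (hG : 0 < G) (hB : 0 < B) (hη : 0 < η)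
    (T : ℕ) (hT : 1 ≤ T)
    (hdiff : ∀ i, Differentiable ℝ (l i))
    (hsmooth : ∀ i, ∀ x y : EuclideanSpace ℝ (Fin d),
      ‖gradient (l i) x - gradient (l i) y‖ ≤ β * ‖x - y‖)
    (hlip : ∀ i, ∀ x y : EuclideanSpace ℝ (Fin d),
      |l i x - l i y| ≤ G * ‖x - y‖)
    (hbdd : ∀ i, ∀ x : EuclideanSpace ℝ (Fin d), 0 ≤ l i x ∧ l i x ≤ B)
    (θ0 : EuclideanSpace ℝ (Fin d))
    -- the trajectory of parameters and distributions as a function of the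
    -- realized index sequence
    (Θ : ℕ → (ℕ → Fin N) → EuclideanSpace ℝ (Fin d))
    (P : ℕ → (ℕ → Fin N) → Fin N → ℝ)
    (hΘ0 : ∀ ω, Θ 0 ω = θ0)
    (hP0 : ∀ ω j, P 0 ω j = 1 / N)
    (hΘ : ∀ t ω, Θ (t + 1) ω =
      Θ t ω - Real.sqrt (2 * B / (G ^ 2 * β * T)) • gradient (l (ω t)) (Θ t ω))
    (hP : ∀ t ω j, P (t + 1) ω j =
      Real.exp (-η * ∑ s ∈ Finset.Icc 1 (t + 1), l j (Θ s ω)) /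
        ∑ k, Real.exp (-η * ∑ s ∈ Finset.Icc 1 (t + 1), l k (Θ s ω))) :
    (1 / (T : ℝ)) * ∑ t ∈ Finset.range T,
        (∑ s : Fin t → Fin N,
          (∏ k : Fin t, P k (padSeq hN s) (s k)) *
            ‖∑ j, P t (padSeq hN s) j • gradient (l j) (Θ t (padSeq hN s))‖ ^ 2) ≤
      G * Real.sqrt (2 * β * B / T) := by
  have hT0 : (0 : ℝ) < T := by exact_mod_cast hT
  have hN0 : (0 : ℝ) < N := by exact_mod_cast hN
  have : Nonempty (Fin N) := ⟨⟨0, hN⟩⟩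
  set α := Real.sqrt (2 * B / (G ^ 2 * β * T)) with hα
  have hα0 : 0 < α := Real.sqrt_pos.2 (by positivity)
  have hα2 : α ^ 2 = 2 * B / (G ^ 2 * β * T) := Real.sq_sqrt (by positivity)
  have hΘa : ∀ t ω ω', (∀ k < t, ω k = ω' k) → Θ t ω = Θ t ω' := by
    intro t
    induction t with
    | zero => intro ω ω' _; rw [hΘ0, hΘ0]
    | succ t ih =>
      intro ω ω' h
      rw [hΘ, hΘ, ih ω ω' (fun k hk => h k (by omega)), h t (by omega)]
  have hPa : ∀ t ω ω', (∀ k < t, ω k = ω' k) → P t ω = P t ω' := by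
    intro t ω ω' h
    funext j
    cases t with
    | zero => rw [hP0, hP0]
    | succ t =>
      rw [hP, hP]
      have : ∀ i, ∑ s ∈ Finset.Icc 1 (t + 1), l i (Θ s ω)
          = ∑ s ∈ Finset.Icc 1 (t + 1), l i (Θ s ω') := fun i =>
        Finset.sum_congr rfl fun s hs => by
          rw [hΘa s ω ω' fun k hk => h k (by have := (Finset.mem_Icc.1 hs).2; omega)]
      simp only [this]
  have hPform : ∀ t ω j, P t ω j =
      Real.exp (-η * ∑ s ∈ Finset.Icc 1 t, l j (Θ s ω)) /
        ∑ k, Real.exp (-η * ∑ s ∈ Finset.Icc 1 t, l k (Θ s ω)) := by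
    intro t ω j
    cases t with
    | zero => simp [hP0]
    | succ t => exact hP t ω j
  have hZ : ∀ t ω, 0 < ∑ k, Real.exp (-η * ∑ s ∈ Finset.Icc 1 t, l k (Θ s ω)) := fun t ω =>
    Finset.sum_pos (fun _ _ => Real.exp_pos _) Finset.univ_nonempty
  have hPpos : ∀ t ω j, 0 < P t ω j := fun t ω j => by
    rw [hPform]; exact div_pos (Real.exp_pos _) (hZ t ω)
  have hPsum : ∀ t ω, ∑ j, P t ω j = 1 := fun t ω => by
    simp only [hPform]
    rw [← Finset.sum_div, div_self (hZ t ω).ne']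
  have hPrec : ∀ t ω j, P (t + 1) ω j = P t ω j * Real.exp (-η * l j (Θ (t + 1) ω)) /
      ∑ k, P t ω k * Real.exp (-η * l k (Θ (t + 1) ω)) := by
    intro t ω j
    have hstep : ∀ k, Real.exp (-η * ∑ s ∈ Finset.Icc 1 (t + 1), l k (Θ s ω)) =
        (∑ k, Real.exp (-η * ∑ s ∈ Finset.Icc 1 t, l k (Θ s ω))) *
          (P t ω k * Real.exp (-η * l k (Θ (t + 1) ω))) := by
      intro k
      rw [hPform t ω k, Finset.sum_Icc_succ_top (by omega), mul_add, Real.exp_add]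
      have := (hZ t ω).ne'
      field_simp
    rw [hP]
    simp only [hstep]
    rw [← Finset.mul_sum, mul_div_mul_left _ _ (hZ t ω).ne']
  set c := β / 2 * α ^ 2 * G ^ 2 with hc
  let Φ : ℕ → (ℕ → Fin N) → ℝ := fun t ω => ∑ j, P t ω j * l j (Θ t ω)
  let g : ℕ → (ℕ → Fin N) → EuclideanSpace ℝ (Fin d) := fun t ω =>
    ∑ j, P t ω j • gradient (l j) (Θ t ω)
  have hstep : ∀ t ω i, Φ (t + 1) (Function.update ω t i) ≤
      Φ t ω - α * inner ℝ (g t ω) (gradient (l i) (Θ t ω)) + c := by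
    intro t ω i
    have hag : ∀ k < t, (Function.update ω t i) k = ω k := fun k hk =>
      Function.update_of_ne (by omega) _ _
    have h1 : Φ (t + 1) (Function.update ω t i) ≤
        ∑ j, P t ω j * l j (Θ (t + 1) (Function.update ω t i)) := by
      simp only [Φ, hPrec, hPa t _ _ hag]
      exact aux_cheb _ _ η hη (fun j => (hPpos t ω j).le) (hPsum t ω)
        (Finset.sum_pos (fun j _ => mul_pos (hPpos t ω j) (Real.exp_pos _)) Finset.univ_nonempty)
    refine h1.trans ?_
    have hθ : Θ (t + 1) (Function.update ω t i) = Θ t ω + -(α • gradient (l i) (Θ t ω)) := by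
      rw [hΘ, hΘa t _ _ hag, Function.update_self, sub_eq_add_neg]
    rw [hθ]
    have h2 : ∀ j, P t ω j * l j (Θ t ω + -(α • gradient (l i) (Θ t ω))) ≤
        P t ω j * (l j (Θ t ω) - α * inner ℝ (gradient (l j) (Θ t ω)) (gradient (l i) (Θ t ω))
          + c) := by
      intro j
      apply mul_le_mul_of_nonneg_left _ (hPpos t ω j).le
      have h3 := aux_descent (l j) β (hdiff j) (hsmooth j) (Θ t ω) (-(α • gradient (l i) (Θ t ω)))
      rw [inner_neg_right, inner_smul_right, norm_neg, norm_smul, Real.norm_of_nonneg hα0.le,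
        mul_pow] at h3
      have h4 := pow_le_pow_left₀ (norm_nonneg _) (aux_grad (l i) G hG (hlip i) (Θ t ω)) 2
      have h5 : β / 2 * (α ^ 2 * ‖gradient (l i) (Θ t ω)‖ ^ 2) ≤ c := by
        rw [hc, mul_assoc]; gcongr
      linarith
    refine (Finset.sum_le_sum fun j _ => h2 j).trans (le_of_eq ?_)
    simp only [Φ, g, sum_inner, inner_smul_left]
    simp only [mul_add, mul_sub, Finset.sum_add_distrib, Finset.sum_sub_distrib]
    rw [← Finset.sum_mul, hPsum, one_mul, Finset.mul_sum]
    congr 2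
    refine Finset.sum_congr rfl fun j _ => ?_
    simp
    ring
  have hstep2 : ∀ t ω, ∑ i, P t ω i * Φ (t + 1) (Function.update ω t i) ≤
      Φ t ω - α * ‖g t ω‖ ^ 2 + c := by
    intro t ω
    refine (Finset.sum_le_sum fun i _ =>
      mul_le_mul_of_nonneg_left (hstep t ω i) (hPpos t ω i).le).trans (le_of_eq ?_)
    have hgg : ‖g t ω‖ ^ 2 = ∑ i, P t ω i * inner ℝ (g t ω) (gradient (l i) (Θ t ω)) := by
      rw [← real_inner_self_eq_norm_sq]
      conv_lhs => rw [show g t ω = ∑ j, P t ω j • gradient (l j) (Θ t ω) from rfl]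
      conv_lhs => rw [inner_sum]
      refine Finset.sum_congr rfl fun i _ => ?_
      rw [inner_smul_right]
    rw [hgg]
    simp only [mul_add, mul_sub, Finset.sum_add_distrib, Finset.sum_sub_distrib]
    rw [← Finset.sum_mul, ← Finset.sum_mul, hPsum, one_mul, one_mul, Finset.mul_sum]
    congr 2
    exact Finset.sum_congr rfl fun j _ => by ring
  let E : ℕ → ((ℕ → Fin N) → ℝ) → ℝ := fun t X =>
    ∑ s : Fin t → Fin N, (∏ k : Fin t, P k (padSeq hN s) (s k)) * X (padSeq hN s)
  have hE1 : ∀ t, E t (fun _ => 1) = 1 := by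
    intro t
    induction t with
    | zero => simp [E]
    | succ t ih =>
      refine ((aux_E hN P hPa t (fun _ => 1)).trans ?_).trans ih
      simp only [E, mul_one, hPsum]
  have hEmono : ∀ t X Y, (∀ ω, X ω ≤ Y ω) → E t X ≤ E t Y := fun t X Y h =>
    Finset.sum_le_sum fun s _ => mul_le_mul_of_nonneg_left (h _)
      (Finset.prod_nonneg fun k _ => (hPpos _ _ _).le)
  have hΦ0 : ∀ t ω, 0 ≤ Φ t ω := fun t ω =>
    Finset.sum_nonneg fun j _ => mul_nonneg (hPpos t ω j).le (hbdd j _).1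
  have hΦB : ∀ t ω, Φ t ω ≤ B := fun t ω => by
    calc Φ t ω ≤ ∑ j, P t ω j * B := Finset.sum_le_sum fun j _ =>
          mul_le_mul_of_nonneg_left (hbdd j _).2 (hPpos t ω j).le
      _ = B := by rw [← Finset.sum_mul, hPsum, one_mul]
  have hEstep : ∀ t, E (t + 1) (Φ (t + 1)) ≤
      E t (Φ t) - α * E t (fun ω => ‖g t ω‖ ^ 2) + c := by
    intro t
    have h1 : E (t + 1) (Φ (t + 1)) =
        E t (fun ω => ∑ i, P t ω i * Φ (t + 1) (Function.update ω t i)) :=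
      aux_E hN P hPa t (Φ (t + 1))
    rw [h1]
    refine (hEmono t _ _ (hstep2 t)).trans (le_of_eq ?_)
    have h2 : c = c * E t (fun _ => 1) := by rw [hE1, mul_one]
    conv_rhs => rw [h2]
    simp only [E, Finset.mul_sum, ← Finset.sum_sub_distrib, ← Finset.sum_add_distrib]
    exact Finset.sum_congr rfl fun s _ => by ring
  have htel : ∀ n : ℕ, α * ∑ t ∈ Finset.range n, E t (fun ω => ‖g t ω‖ ^ 2) ≤
      E 0 (Φ 0) - E n (Φ n) + n * c := by
    intro n
    induction n with
    | zero => simp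
    | succ n ih =>
      rw [Finset.sum_range_succ, mul_add]
      push_cast
      linarith [hEstep n]
  have hE0 : E 0 (Φ 0) ≤ B := by
    have := hΦB 0 (padSeq hN (Fin.elim0 : Fin 0 → Fin N))
    refine (hEmono 0 _ (fun _ => B) (hΦB 0)).trans ?_
    simp [E]
  have hET : 0 ≤ E T (Φ T) := Finset.sum_nonneg fun s _ =>
    mul_nonneg (Finset.prod_nonneg fun k _ => (hPpos _ _ _).le) (hΦ0 _ _)
  have hTc : T * c = B := by
    rw [hc, hα2]; field_simp
  have hfin : α * ∑ t ∈ Finset.range T, E t (fun ω => ‖g t ω‖ ^ 2) ≤ 2 * B := by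
    linarith [htel T]
  change (1 / (T : ℝ)) * ∑ t ∈ Finset.range T, E t (fun ω => ‖g t ω‖ ^ 2) ≤ _
  have hsq : α * (G * Real.sqrt (2 * β * B / T)) = 2 * B / T := by
    have h : (2 * β * B / T) = (G * β * α) ^ 2 := by
      rw [mul_pow, hα2]; field_simp
    rw [h, Real.sqrt_sq (by positivity)]
    calc α * (G * (G * β * α)) = G ^ 2 * β * α ^ 2 := by ring
      _ = 2 * B / T := by rw [hα2]; field_simp
  refine le_of_mul_le_mul_left ?_ hα0
  rw [hsq]
  calc α * (1 / (T : ℝ) * ∑ t ∈ Finset.range T, E t (fun ω => ‖g t ω‖ ^ 2))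
      = (α * ∑ t ∈ Finset.range T, E t (fun ω => ‖g t ω‖ ^ 2)) / T := by ring
    _ ≤ 2 * B / T := by gcongr
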